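/- For every σ > 0 and q ∈ (0,1], the PLRV L_{σ,q} of a single iteration of the Poisson subsampled Gaussian mechanism satisfies Var(L_{σ,q}) ≤ 1/σ² + 1/(4σ⁴). -/

import Mathlib

/-!
Write `ℓ(t) = (t - 1/2) / σ²` for the privacy loss without subsampling. The subsampled loss is
`ln (1 - q + q e^ℓ)`, and `x ↦ ln (a + b eˣ)` is 1-Lipschitz, so the subsampled loss is a
`1/σ²`-Lipschitz function of `t`. A `K`-Lipschitz map multiplies variances by at most `K²`, hence
`Var(L) ≤ σ⁻⁴ Var(t)`. By the law of total variance, `t ∼ P_{σ,q}` has variance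
`σ² + q (1 - q) ≤ σ² + 1/4`.
-/

open MeasureTheory ProbabilityTheory Real Filter

/-- Density of the dominating-pair mixture `P_{σ,q}` for the Poisson subsampled Gaussian
mechanism with sensitivity 1: `p_{σ,q}(t) = q·φ_σ(t−1) + (1−q)·φ_σ(t)`. -/
noncomputable def mixDensity (σ q t : ℝ) : ℝ :=
  q * gaussianPDFReal 1 (σ ^ 2).toNNReal t + (1 - q) * gaussianPDFReal 0 (σ ^ 2).toNNReal t

/-- The mixture measure `P_{σ,q}`. -/
noncomputable def mixMeasure (σ q : ℝ) : Measure ℝ :=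
  MeasureTheory.volume.withDensity fun t => ENNReal.ofReal (mixDensity σ q t)

/-- The privacy loss function `t ↦ ln(p_{σ,q}(t)/φ_σ(t))`. -/
noncomputable def plrv (σ q t : ℝ) : ℝ :=
  Real.log (mixDensity σ q t / gaussianPDFReal 0 (σ ^ 2).toNNReal t)

section Mixture

variable {Ω : Type*} {mΩ : MeasurableSpace Ω} {μ ν : Measure Ω} {X : Ω → ℝ}

/-- The two-component mixture with weights `p` on `μ` and `1 - p` on `ν`. The weight lives in
`unitInterval`, so that a mixture of probability measures is always a probability measure. -/
noncomputable def mixture (p : unitInterval) (μ ν : Measure Ω) : Measure Ω :=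
  unitInterval.toNNReal p • μ + unitInterval.toNNReal (unitInterval.symm p) • ν

instance isProbabilityMeasure_mixture (p : unitInterval) [IsProbabilityMeasure μ]
    [IsProbabilityMeasure ν] : IsProbabilityMeasure (mixture p μ ν) :=
  inferInstanceAs <| IsProbabilityMeasure <|
    unitInterval.toNNReal p • μ + unitInterval.toNNReal (unitInterval.symm p) • ν

lemma integral_mixture (p : unitInterval) (hμ : Integrable X μ) (hν : Integrable X ν) :
    ∫ ω, X ω ∂mixture p μ ν = p * ∫ ω, X ω ∂μ + (1 - p) * ∫ ω, X ω ∂ν := by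
  rw [mixture, integral_add_measure hμ.smul_measure_nnreal hν.smul_measure_nnreal,
    integral_smul_nnreal_measure, integral_smul_nnreal_measure]
  simp only [NNReal.smul_def, unitInterval.coe_toNNReal, unitInterval.coe_symm_eq, smul_eq_mul]

lemma memLp_two_mixture (p : unitInterval) (hμ : MemLp X 2 μ) (hν : MemLp X 2 ν) :
    MemLp X 2 (mixture p μ ν) := by
  have hmeas : AEStronglyMeasurable X (mixture p μ ν) :=
    (hμ.aestronglyMeasurable.smul_measure _).add_measure (hν.aestronglyMeasurable.smul_measure _)
  rw [memLp_two_iff_integrable_sq hmeas]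
  exact hμ.integrable_sq.smul_measure_nnreal.add_measure hν.integrable_sq.smul_measure_nnreal

lemma variance_mixture (p : unitInterval) [IsProbabilityMeasure μ] [IsProbabilityMeasure ν]
    (hμ : MemLp X 2 μ) (hν : MemLp X 2 ν) :
    Var[X; mixture p μ ν] = p * Var[X; μ] + (1 - p) * Var[X; ν]
      + p * (1 - p) * (∫ ω, X ω ∂μ - ∫ ω, X ω ∂ν) ^ 2 := by
  rw [variance_eq_sub (memLp_two_mixture p hμ hν), variance_eq_sub hμ, variance_eq_sub hν]
  simp only [Pi.pow_apply]
  rw [integral_mixture p hμ.integrable_sq hν.integrable_sq,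
    integral_mixture p (hμ.integrable one_le_two) (hν.integrable one_le_two)]
  ring

end Mixture

lemma variance_comp_le_of_lipschitzWith {Ω : Type*} {mΩ : MeasurableSpace Ω} {μ : Measure Ω}
    [IsProbabilityMeasure μ] {X : Ω → ℝ} {f : ℝ → ℝ} {K : NNReal} (hf : LipschitzWith K f)
    (hX : MemLp X 2 μ) :
    Var[fun ω => f (X ω); μ] ≤ K ^ 2 * Var[X; μ] := by
  set m := ∫ ω, X ω ∂μ
  have hfX : AEStronglyMeasurable (fun ω => f (X ω)) μ :=
    hf.continuous.comp_aestronglyMeasurable hX.aestronglyMeasurable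
  have hint : Integrable (fun ω => (X ω - m) ^ 2) μ := (hX.sub (memLp_const m)).integrable_sq
  have hsq (x : ℝ) : (f x - f m) ^ 2 ≤ K ^ 2 * (x - m) ^ 2 := by
    rw [← mul_pow, sq_le_sq, abs_mul, NNReal.abs_eq]
    exact hf.dist_le_mul x m
  calc Var[fun ω => f (X ω); μ]
      = Var[fun ω => f (X ω) - f m; μ] := (variance_sub_const hfX _).symm
    _ ≤ ∫ ω, (f (X ω) - f m) ^ 2 ∂μ :=
        variance_le_expectation_sq (hfX.sub aestronglyMeasurable_const)
    _ ≤ ∫ ω, K ^ 2 * (X ω - m) ^ 2 ∂μ :=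
        integral_mono_of_nonneg (ae_of_all _ fun _ => sq_nonneg _) (hint.const_mul _)
          (ae_of_all _ fun ω => hsq (X ω))
    _ = K ^ 2 * Var[X; μ] := by
        rw [integral_const_mul, variance_eq_integral hX.aestronglyMeasurable.aemeasurable]

lemma lipschitzWith_log_add_mul_exp {a b : ℝ} (ha : 0 ≤ a) (hb : 0 ≤ b) (hab : 0 < a + b) :
    LipschitzWith 1 fun x => log (a + b * exp x) := by
  have hpos (x : ℝ) : 0 < a + b * exp x := by
    rcases hb.eq_or_lt with rfl | hb
    · simpa using hab
    · positivity
  refine LipschitzWith.of_le_add fun x y => ?_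
  have hexp : exp x ≤ exp (dist x y) * exp y := by
    rw [← exp_add, exp_le_exp]
    linarith [le_abs_self (x - y), Real.dist_eq x y]
  calc log (a + b * exp x)
      ≤ log (exp (dist x y) * (a + b * exp y)) := by
        refine log_le_log (hpos x) ?_
        calc a + b * exp x
            ≤ exp (dist x y) * a + b * (exp (dist x y) * exp y) := by
              gcongr
              exact le_mul_of_one_le_left ha (one_le_exp dist_nonneg)
          _ = exp (dist x y) * (a + b * exp y) := by ring
    _ = log (a + b * exp y) + dist x y := by
        rw [log_mul (exp_ne_zero _) (hpos y).ne', log_exp, add_comm]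

lemma gaussianPDFReal_eq_exp_mul_gaussianPDFReal (m₁ m₂ : ℝ) (v : NNReal) (t : ℝ) :
    gaussianPDFReal m₁ v t =
      exp ((m₁ - m₂) * (t - (m₁ + m₂) / 2) / v) * gaussianPDFReal m₂ v t := by
  rw [gaussianPDFReal, gaussianPDFReal, mul_left_comm, ← exp_add]
  congr 2
  ring

section SubsampledGaussian

variable {σ : ℝ}

lemma toNNReal_sq_ne_zero (hσ : σ ≠ 0) : (σ ^ 2).toNNReal ≠ 0 :=
  (toNNReal_pos.2 (sq_pos_of_ne_zero hσ)).ne'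

lemma plrv_eq_log_add_mul_exp (hσ : σ ≠ 0) (q t : ℝ) :
    plrv σ q t = log (1 - q + q * exp ((t - 1 / 2) / σ ^ 2)) := by
  have hpos := gaussianPDFReal_pos 0 (σ ^ 2).toNNReal t (toNNReal_sq_ne_zero hσ)
  rw [plrv, mixDensity, gaussianPDFReal_eq_exp_mul_gaussianPDFReal 1 0, ← mul_assoc, ← add_mul,
    mul_div_cancel_right₀ _ hpos.ne', coe_toNNReal _ (sq_nonneg σ), sub_zero, add_zero, one_mul,
    add_comm]

lemma lipschitzWith_plrv (hσ : σ ≠ 0) (q : unitInterval) :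
    LipschitzWith (σ ^ 2)⁻¹.toNNReal (plrv σ q) := by
  refine LipschitzWith.of_le_add_mul' _ fun x y => ?_
  have hlog := (lipschitzWith_log_add_mul_exp (sub_nonneg.2 q.2.2) q.2.1 (by simp)).le_add_mul
    ((x - 1 / 2) / σ ^ 2) ((y - 1 / 2) / σ ^ 2)
  have hdist : dist ((x - 1 / 2) / σ ^ 2) ((y - 1 / 2) / σ ^ 2) = (σ ^ 2)⁻¹ * dist x y := by
    rw [Real.dist_eq, Real.dist_eq, ← sub_div, sub_sub_sub_cancel_right, abs_div,
      abs_of_nonneg (sq_nonneg σ), div_eq_inv_mul]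
  rwa [NNReal.coe_one, one_mul, hdist, ← plrv_eq_log_add_mul_exp hσ,
    ← plrv_eq_log_add_mul_exp hσ] at hlog

lemma mixMeasure_eq_mixture (hσ : σ ≠ 0) (q : unitInterval) :
    mixMeasure σ q =
      mixture q (gaussianReal 1 (σ ^ 2).toNNReal) (gaussianReal 0 (σ ^ 2).toNNReal) := by
  have hv := toNNReal_sq_ne_zero hσ
  have hcoe (p : unitInterval) : (unitInterval.toNNReal p : ENNReal) = ENNReal.ofReal p :=
    (ENNReal.ofReal_eq_coe_nnreal p.2.1).symm
  have hq := sub_nonneg.2 q.2.2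
  rw [mixture, gaussianReal_of_var_ne_zero _ hv, gaussianReal_of_var_ne_zero _ hv,
    ENNReal.smul_def, ENNReal.smul_def,
    ← withDensity_smul _ (measurable_gaussianPDF _ _),
    ← withDensity_smul _ (measurable_gaussianPDF _ _),
    ← withDensity_add_left ((measurable_gaussianPDF _ _).const_smul _), mixMeasure]
  congr with t
  simp only [mixDensity, gaussianPDF, Pi.add_apply, Pi.smul_apply, smul_eq_mul, hcoe,
    unitInterval.coe_symm_eq]
  rw [ENNReal.ofReal_add (mul_nonneg q.2.1 (gaussianPDFReal_nonneg _ _ _))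
      (mul_nonneg hq (gaussianPDFReal_nonneg _ _ _)),
    ENNReal.ofReal_mul q.2.1, ENNReal.ofReal_mul hq]

lemma memLp_two_id_mixMeasure (hσ : σ ≠ 0) (q : unitInterval) :
    MemLp id 2 (mixMeasure σ q) := by
  rw [mixMeasure_eq_mixture hσ]
  exact memLp_two_mixture q (memLp_id_gaussianReal 2) (memLp_id_gaussianReal 2)

lemma variance_id_mixMeasure (hσ : σ ≠ 0) (q : unitInterval) :
    Var[id; mixMeasure σ q] = σ ^ 2 + q * (1 - q) := by
  rw [mixMeasure_eq_mixture hσ,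
    variance_mixture q (memLp_id_gaussianReal 2) (memLp_id_gaussianReal 2)]
  simp only [variance_id_gaussianReal, id_eq, integral_id_gaussianReal,
    coe_toNNReal _ (sq_nonneg σ)]
  ring

lemma variance_plrv_le (hσ : σ ≠ 0) (q : unitInterval) :
    Var[plrv σ q; mixMeasure σ q] ≤ (σ ^ 2 + q * (1 - q)) / σ ^ 4 := by
  have : IsProbabilityMeasure (mixMeasure σ q) := by
    rw [mixMeasure_eq_mixture hσ]
    infer_instance
  calc Var[plrv σ q; mixMeasure σ q]
      ≤ (σ ^ 2)⁻¹.toNNReal ^ 2 * Var[id; mixMeasure σ q] :=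
        variance_comp_le_of_lipschitzWith (lipschitzWith_plrv hσ q) (memLp_two_id_mixMeasure hσ q)
    _ = (σ ^ 2 + q * (1 - q)) / σ ^ 4 := by
        rw [variance_id_mixMeasure hσ, coe_toNNReal _ (inv_nonneg.2 (sq_nonneg σ))]
        ring

end SubsampledGaussian

/-- The variance of the PLRV of a single iteration of the Poisson subsampled Gaussian
mechanism is at most `1/σ² + 1/(4σ⁴)`. -/
theorem plrv_variance_upper_bound (σ q : ℝ) (hσ : 0 < σ) (hq : q ∈ Set.Ioc (0 : ℝ) 1) :
    ProbabilityTheory.variance (plrv σ q) (mixMeasure σ q) ≤ 1 / σ ^ 2 + 1 / (4 * σ ^ 4) := by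
  calc Var[plrv σ q; mixMeasure σ q]
      ≤ (σ ^ 2 + q * (1 - q)) / σ ^ 4 :=
        variance_plrv_le hσ.ne' ⟨q, Set.Ioc_subset_Icc_self hq⟩
    _ ≤ (σ ^ 2 + 1 / 4) / σ ^ 4 := by
        gcongr
        linarith [sq_nonneg (q - 1 / 2)]
    _ = 1 / σ ^ 2 + 1 / (4 * σ ^ 4) := by field_simp
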